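/- Let T be a Wakamatsu tilting (S,R)-bimodule and N a Gorenstein flat right S-module. If either the projective dimension of T as a left S-module is finite, or the injective dimension of T as a left S-module is finite, then N belongs to the Auslander class 𝒜_T(S). -/

import Mathlib

open Function MulOpposite

universe u

noncomputable section

/-! ## Chain conditions -/

/-- A ring is right coherent if every finitely generated right ideal is finitely presented. -/
def IsRightCoherentRing (R : Type u) [Ring R] : Prop :=
  ∀ I : Submodule Rᵐᵒᵖ R, I.FG → Module.FinitePresentation Rᵐᵒᵖ I

/-- A ring is left coherent if every finitely generated left ideal is finitely presented. -/
def IsLeftCoherentRing (S : Type u) [Ring S] : Prop :=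
  ∀ I : Submodule S S, I.FG → Module.FinitePresentation S I

/-- A ring is right Noetherian if every right ideal is finitely generated. -/
def IsRightNoetherianRing (R : Type u) [Ring R] : Prop :=
  ∀ I : Submodule Rᵐᵒᵖ R, I.FG

/-! ## The tensor product `N ⊗_S T` of a right `S`-module `N` with a left `S`-module `T` -/

section MTensor

variable (S : Type u) [Ring S]
variable (N : Type u) [AddCommGroup N] [Module Sᵐᵒᵖ N]
variable (T : Type u) [AddCommGroup T] [Module S T]

/-- The subgroup of balancing relations defining `N ⊗_S T` as a quotient of `T ⊗_ℤ N`. -/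
def mtRel : AddSubgroup (TensorProduct ℤ T N) :=
  AddSubgroup.closure
    {x | ∃ (s : S) (t : T) (n : N), x = (s • t) ⊗ₜ[ℤ] n - t ⊗ₜ[ℤ] (op s • n)}

/-- `MTensor S N T` is the tensor product `N ⊗_S T` of a right `S`-module `N` with a left
`S`-module `T`, realized as a quotient of `T ⊗_ℤ N`. -/
def MTensor : Type u := TensorProduct ℤ T N ⧸ mtRel S N T

instance : AddCommGroup (MTensor S N T) :=
  inferInstanceAs (AddCommGroup (TensorProduct ℤ T N ⧸ mtRel S N T))

variable {S N T}

/-- `MTensor.mk n t` is the element `n ⊗ t` of `N ⊗_S T`. -/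
def MTensor.mk (n : N) (t : T) : MTensor S N T := QuotientAddGroup.mk (t ⊗ₜ[ℤ] n)

section Map

variable {N' : Type u} [AddCommGroup N'] [Module Sᵐᵒᵖ N']

/-- Functoriality of `N ⊗_S T` in the right `S`-module variable `N`. -/
def MTensor.map (g : N →ₗ[Sᵐᵒᵖ] N') : MTensor S N T →+ MTensor S N' T :=
  QuotientAddGroup.map _ _
    (LinearMap.lTensor T g.toAddMonoidHom.toIntLinearMap).toAddMonoidHom
    (by
      refine (AddSubgroup.closure_le _).2 ?_
      rintro x ⟨s, t, n, rfl⟩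
      simp only [SetLike.mem_coe, AddSubgroup.mem_comap, LinearMap.toAddMonoidHom_coe,
        map_sub, LinearMap.lTensor_tmul, AddMonoidHom.coe_toIntLinearMap,
        LinearMap.toAddMonoidHom_coe, map_smul]
      exact AddSubgroup.subset_closure ⟨s, t, g n, rfl⟩)

end Map

section LMap

variable {T' : Type u} [AddCommGroup T'] [Module S T']

/-- Functoriality of `N ⊗_S T` in the left `S`-module variable `T`. -/
def MTensor.lmap (h : T →ₗ[S] T') : MTensor S N T →+ MTensor S N T' :=
  QuotientAddGroup.map _ _
    (LinearMap.rTensor N h.toAddMonoidHom.toIntLinearMap).toAddMonoidHom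
    (by
      refine (AddSubgroup.closure_le _).2 ?_
      rintro x ⟨s, t, n, rfl⟩
      simp only [SetLike.mem_coe, AddSubgroup.mem_comap, LinearMap.toAddMonoidHom_coe,
        map_sub, LinearMap.rTensor_tmul, AddMonoidHom.coe_toIntLinearMap, map_smul]
      exact AddSubgroup.subset_closure ⟨s, h t, n, rfl⟩)

end LMap

section Bimod

variable (R : Type u) [Ring R] [Module Rᵐᵒᵖ T] [SMulCommClass S Rᵐᵒᵖ T]

instance MTensor.instSMul : SMul Rᵐᵒᵖ (MTensor S N T) :=
  ⟨fun ρ =>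
    QuotientAddGroup.map _ _ (DistribMulAction.toAddMonoidHom (TensorProduct ℤ T N) ρ)
      (by
        refine (AddSubgroup.closure_le _).2 ?_
        rintro x ⟨s, t, n, rfl⟩
        simp only [SetLike.mem_coe, AddSubgroup.mem_comap,
          DistribMulAction.toAddMonoidHom_apply, smul_sub, TensorProduct.smul_tmul']
        exact AddSubgroup.subset_closure ⟨s, ρ • t, n, by rw [smul_comm s ρ t]⟩)⟩

instance MTensor.instModule : Module Rᵐᵒᵖ (MTensor S N T) :=
  Function.Surjective.module Rᵐᵒᵖ (QuotientAddGroup.mk' (mtRel S N T))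
    (QuotientAddGroup.mk'_surjective _) (fun _ _ => rfl)

theorem MTensor.smul_mk (ρ : Rᵐᵒᵖ) (n : N) (t : T) :
    ρ • (MTensor.mk n t : MTensor S N T) = MTensor.mk n (ρ • t) := by
  show QuotientAddGroup.mk (ρ • (t ⊗ₜ[ℤ] n)) = QuotientAddGroup.mk ((ρ • t) ⊗ₜ[ℤ] n)
  rw [TensorProduct.smul_tmul']

theorem MTensor.mk_add_right (n : N) (t t' : T) :
    (MTensor.mk n (t + t') : MTensor S N T) = MTensor.mk n t + MTensor.mk n t' := by
  show QuotientAddGroup.mk _ = _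
  rw [TensorProduct.add_tmul]
  rfl

/-- The natural map `θ_N : N → Hom_R(T, N ⊗_S T)`, `n ↦ (t ↦ n ⊗ t)`. -/
def MTensor.theta (n : N) : T →ₗ[Rᵐᵒᵖ] MTensor S N T where
  toFun t := MTensor.mk n t
  map_add' t t' := MTensor.mk_add_right n t t'
  map_smul' ρ t := (MTensor.smul_mk R ρ n t).symm

variable (S T N) in
/-- The natural map `θ_N : N → Hom_R(T, N ⊗_S T)` as a function. -/
def MTensor.thetaFun : N → (T →ₗ[Rᵐᵒᵖ] MTensor S N T) := fun n => MTensor.theta R n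

end Bimod

end MTensor

/-! ## The right `S`-module structure on `Hom_A(T, M)` induced by a left `S`-action on `T` -/

section HomModule

variable {B A : Type u} [Ring B] [Ring A]
variable {T : Type u} [AddCommGroup T] [Module A T] [Module B T] [SMulCommClass B A T]
variable {M : Type u} [AddCommGroup M] [Module A M]

instance homDomSMul : SMul Bᵐᵒᵖ (T →ₗ[A] M) :=
  ⟨fun b f =>
    { toFun := fun t => f (b.unop • t)
      map_add' := fun t t' => by
        show f (b.unop • (t + t')) = f (b.unop • t) + f (b.unop • t')
        rw [smul_add, map_add]
      map_smul' := fun a t => by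
        show f (b.unop • a • t) = a • f (b.unop • t)
        rw [smul_comm b.unop a t, map_smul] }⟩

@[simp] theorem homDomSMul_apply (b : Bᵐᵒᵖ) (f : T →ₗ[A] M) (t : T) :
    (b • f) t = f (b.unop • t) := rfl

instance homDomModule : Module Bᵐᵒᵖ (T →ₗ[A] M) where
  one_smul f := LinearMap.ext fun t => by simp
  mul_smul b b' f := LinearMap.ext fun t => by simp [mul_smul]
  smul_zero b := LinearMap.ext fun t => rfl
  smul_add b f g := LinearMap.ext fun t => rfl
  add_smul b b' f := LinearMap.ext fun t => by simp [add_smul]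
  zero_smul f := LinearMap.ext fun t => by simp

end HomModule

/-! ## The evaluation map `ν_M : Hom_R(T, M) ⊗_S T → M` -/

section Nu

variable (S R : Type u) [Ring S] [Ring R]
variable (T : Type u) [AddCommGroup T] [Module S T] [Module Rᵐᵒᵖ T] [SMulCommClass S Rᵐᵒᵖ T]
variable (M : Type u) [AddCommGroup M] [Module Rᵐᵒᵖ M]

/-- The evaluation map `ν_M : Hom_R(T, M) ⊗_S T → M`, `f ⊗ t ↦ f t`. -/
def MTensor.nuFun : MTensor S (T →ₗ[Rᵐᵒᵖ] M) T →+ M :=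
  QuotientAddGroup.lift _
    (TensorProduct.liftAddHom
      { toFun := fun t =>
          { toFun := fun f : T →ₗ[Rᵐᵒᵖ] M => f t
            map_zero' := rfl
            map_add' := fun f g => rfl }
        map_zero' := AddMonoidHom.ext fun f => f.map_zero
        map_add' := fun t t' => AddMonoidHom.ext fun f => f.map_add t t' }
      (fun z t f => by
        show f (z • t) = (z • f) t
        rw [map_zsmul, LinearMap.smul_apply]))
    (by
      refine (AddSubgroup.closure_le _).2 ?_
      rintro x ⟨s, t, f, rfl⟩
      simp only [SetLike.mem_coe, AddMonoidHom.mem_ker, map_sub,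
        TensorProduct.liftAddHom_tmul, AddMonoidHom.coe_mk, ZeroHom.coe_mk]
      show f (s • t) - (op s • f) t = 0
      rw [homDomSMul_apply]
      simp)

end Nu


/-! ## Resolutions and derived-functor vanishing -/

/-- The data of a nonnegatively graded chain complex `⋯ → P 1 → P 0 → X` of `A`-modules. -/
structure ResolutionData (A : Type u) [Ring A] (X : Type u) [AddCommGroup X] [Module A X] :
    Type (u + 1) where
  P : ℕ → Type u
  [instAdd : ∀ n, AddCommGroup (P n)]
  [instMod : ∀ n, Module A (P n)]
  d : ∀ n, P (n + 1) →ₗ[A] P n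
  ε : P 0 →ₗ[A] X

attribute [instance] ResolutionData.instAdd ResolutionData.instMod

/-- The property of being a projective resolution. -/
structure ResolutionData.IsProjResolution {A : Type u} [Ring A] {X : Type u} [AddCommGroup X]
    [Module A X] (Q : ResolutionData A X) : Prop where
  proj : ∀ n, Module.Projective A (Q.P n)
  surj : Function.Surjective Q.ε
  exact0 : Function.Exact (Q.d 0) Q.ε
  exactSucc : ∀ n, Function.Exact (Q.d (n + 1)) (Q.d n)

/-- `X` has a resolution by finitely generated projective `A`-modules. -/
def HasFGProjResolution (A : Type u) [Ring A] (X : Type u) [AddCommGroup X] [Module A X] : Prop :=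
  ∃ Q : ResolutionData A X, Q.IsProjResolution ∧ ∀ n, Module.Finite A (Q.P n)

/-- `Ext^i_A(X, Y) = 0` for all `i ≥ 1`: some (equivalently, any) projective resolution of `X`
has `Hom_A(-, Y)`-complex exact at all positive degrees. -/
def ExtVanishAll (A : Type u) [Ring A] (X Y : Type u) [AddCommGroup X] [Module A X]
    [AddCommGroup Y] [Module A Y] : Prop :=
  ∃ Q : ResolutionData A X, Q.IsProjResolution ∧
    ∀ j : ℕ, Function.Exact
      (fun f : Q.P j →ₗ[A] Y => f.comp (Q.d j))
      (fun f : Q.P (j + 1) →ₗ[A] Y => f.comp (Q.d (j + 1)))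

/-- `Ext^1_A(X, Y) = 0`: every short exact sequence `0 → Y → E → X → 0` splits. -/
def Ext1Vanishes (A : Type u) [Ring A] (X Y : Type u) [AddCommGroup X] [Module A X]
    [AddCommGroup Y] [Module A Y] : Prop :=
  ∀ (E : Type u) [AddCommGroup E] [Module A E] (i : Y →ₗ[A] E) (p : E →ₗ[A] X),
    Function.Injective i → Function.Surjective p → Function.Exact i p →
      ∃ s : X →ₗ[A] E, p.comp s = LinearMap.id

/-- `Tor^S_i(N, T) = 0` for all `i ≥ 1`: some (equivalently, any) projective resolution of the
right `S`-module `N` stays exact in positive degrees after applying `- ⊗_S T`. -/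
def TorVanishAll (S : Type u) [Ring S] (N : Type u) [AddCommGroup N] [Module Sᵐᵒᵖ N]
    (T : Type u) [AddCommGroup T] [Module S T] : Prop :=
  ∃ Q : ResolutionData Sᵐᵒᵖ N, Q.IsProjResolution ∧
    ∀ j : ℕ, Function.Exact
      (⇑(MTensor.map (T := T) (Q.d (j + 1))))
      (⇑(MTensor.map (T := T) (Q.d j)))

/-! ## Homological dimensions -/

/-- A surjection onto `M` from some module. -/
structure EpiOnto (A : Type u) [Ring A] (M : ModuleCat.{u} A) : Type (u + 1) where
  P : ModuleCat.{u} A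
  f : P →ₗ[A] M
  surj : Function.Surjective f

/-- An injection of `M` into some module. -/
structure MonoInto (A : Type u) [Ring A] (M : ModuleCat.{u} A) : Type (u + 1) where
  E : ModuleCat.{u} A
  f : M →ₗ[A] E
  inj : Function.Injective f

/-- `HasClassResolution A 𝒞 n M` says that there is an exact sequence
`0 → C_n → ⋯ → C_0 → M → 0` with all `C_i` in the class `𝒞`. -/
def HasClassResolution (A : Type u) [Ring A] (C : ModuleCat.{u} A → Prop) :
    ℕ → ModuleCat.{u} A → Prop
  | 0, M => C M
  | n + 1, M => ∃ e : EpiOnto A M, C e.P ∧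
      HasClassResolution A C n (ModuleCat.of A (LinearMap.ker e.f))

/-- `HasClassCoresolution A 𝒞 n M` says that there is an exact sequence
`0 → M → C^0 → ⋯ → C^n → 0` with all `C^i` in the class `𝒞`. -/
def HasClassCoresolution (A : Type u) [Ring A] (C : ModuleCat.{u} A → Prop) :
    ℕ → ModuleCat.{u} A → Prop
  | 0, M => C M
  | n + 1, M => ∃ m : MonoInto A M, C m.E ∧
      HasClassCoresolution A C n (ModuleCat.of A ((↥m.E) ⧸ LinearMap.range m.f))

/-- The projective dimension of `M` is at most `n`. -/
def ProjDimLE (A : Type u) [Ring A] (M : Type u) [AddCommGroup M] [Module A M] (n : ℕ) : Prop :=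
  HasClassResolution A (fun P => Module.Projective A P) n (ModuleCat.of A M)

/-- The injective dimension of `M` is at most `n`. -/
def InjDimLE (A : Type u) [Ring A] (M : Type u) [AddCommGroup M] [Module A M] (n : ℕ) : Prop :=
  HasClassCoresolution A (fun E => Module.Injective A E) n (ModuleCat.of A M)

/-- A right `S`-module `N` is flat if `N ⊗_S -` preserves injections of left `S`-modules. -/
def IsFlatRightModule (S : Type u) [Ring S] (N : Type u) [AddCommGroup N] [Module Sᵐᵒᵖ N] :
    Prop :=
  ∀ (X Y : Type u) [AddCommGroup X] [Module S X] [AddCommGroup Y] [Module S Y]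
    (g : X →ₗ[S] Y), Function.Injective g →
      Function.Injective (MTensor.lmap (N := N) g)

/-- The flat dimension of the right `S`-module `N` is at most `n`. -/
def FlatDimLE (S : Type u) [Ring S] (N : Type u) [AddCommGroup N] [Module Sᵐᵒᵖ N] (n : ℕ) :
    Prop :=
  HasClassResolution Sᵐᵒᵖ (fun P => IsFlatRightModule S P) n (ModuleCat.of Sᵐᵒᵖ N)

/-! ## Gorenstein homological algebra -/

/-- The data of a `ℤ`-indexed complex of `A`-modules. -/
structure ZComplex (A : Type u) [Ring A] : Type (u + 1) where
  P : ℤ → Type u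
  [instAdd : ∀ i, AddCommGroup (P i)]
  [instMod : ∀ i, Module A (P i)]
  d : ∀ i, P i →ₗ[A] P (i + 1)

attribute [instance] ZComplex.instAdd ZComplex.instMod

/-- Exactness of a `ℤ`-indexed complex. -/
def ZComplex.IsExact {A : Type u} [Ring A] (C : ZComplex A) : Prop :=
  ∀ i, Function.Exact (C.d i) (C.d (i + 1))

/-- A module is Gorenstein projective if it is a kernel of a totally acyclic complex of
projective modules. -/
def IsGorensteinProjective (A : Type u) [Ring A] (N : Type u) [AddCommGroup N] [Module A N] :
    Prop :=
  ∃ C : ZComplex A, (∀ i, Module.Projective A (C.P i)) ∧ C.IsExact ∧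
    (∀ (Q : Type u) [AddCommGroup Q] [Module A Q], Module.Projective A Q →
      ∀ i, Function.Exact
        (fun f : C.P (i + 1 + 1) →ₗ[A] Q => f.comp (C.d (i + 1)))
        (fun f : C.P (i + 1) →ₗ[A] Q => f.comp (C.d i))) ∧
    Nonempty (N ≃ₗ[A] LinearMap.ker (C.d 0))

/-- A module is Gorenstein injective if it is a kernel of a totally acyclic complex of
injective modules. -/
def IsGorensteinInjective (A : Type u) [Ring A] (M : Type u) [AddCommGroup M] [Module A M] :
    Prop :=
  ∃ C : ZComplex A, (∀ i, Module.Injective A (C.P i)) ∧ C.IsExact ∧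
    (∀ (I : Type u) [AddCommGroup I] [Module A I], Module.Injective A I →
      ∀ i, Function.Exact
        (fun f : I →ₗ[A] C.P i => (C.d i).comp f)
        (fun f : I →ₗ[A] C.P (i + 1) => (C.d (i + 1)).comp f)) ∧
    Nonempty (M ≃ₗ[A] LinearMap.ker (C.d 0))

/-- A right `S`-module is Gorenstein flat if it is a kernel of a complex of flat right
`S`-modules which stays exact after tensoring with any injective left `S`-module. -/
def IsGorensteinFlat (S : Type u) [Ring S] (N : Type u) [AddCommGroup N] [Module Sᵐᵒᵖ N] :
    Prop :=
  ∃ C : ZComplex Sᵐᵒᵖ, (∀ i, IsFlatRightModule S (C.P i)) ∧ C.IsExact ∧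
    (∀ (I : Type u) [AddCommGroup I] [Module S I], Module.Injective S I →
      ∀ i, Function.Exact
        (⇑(MTensor.map (T := I) (C.d i)))
        (⇑(MTensor.map (T := I) (C.d (i + 1))))) ∧
    Nonempty (N ≃ₗ[Sᵐᵒᵖ] LinearMap.ker (C.d 0))

/-- The Gorenstein projective dimension of `N` is at most `n`. -/
def GpdLE (A : Type u) [Ring A] (N : Type u) [AddCommGroup N] [Module A N] (n : ℕ) : Prop :=
  HasClassResolution A (fun P => IsGorensteinProjective A P) n (ModuleCat.of A N)

/-- The Gorenstein flat dimension of the right `S`-module `N` is at most `n`. -/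
def GfdLE (S : Type u) [Ring S] (N : Type u) [AddCommGroup N] [Module Sᵐᵒᵖ N] (n : ℕ) : Prop :=
  HasClassResolution Sᵐᵒᵖ (fun P => IsGorensteinFlat S P) n (ModuleCat.of Sᵐᵒᵖ N)

/-- The Gorenstein injective dimension of `M` is at most `n`. -/
def GidLE (A : Type u) [Ring A] (M : Type u) [AddCommGroup M] [Module A M] (n : ℕ) : Prop :=
  HasClassCoresolution A (fun E => IsGorensteinInjective A E) n (ModuleCat.of A M)

/-! ## Module classes `Prod(C)`, `Add(C)`, `add(C)` and (co)generators -/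

/-- `M` is a retract (equivalently, a direct summand up to isomorphism) of `P`. -/
def IsRetractOf (A : Type u) [Ring A] (M P : Type u) [AddCommGroup M] [Module A M]
    [AddCommGroup P] [Module A P] : Prop :=
  ∃ (f : M →ₗ[A] P) (g : P →ₗ[A] M), g.comp f = LinearMap.id

/-- `Prod(C)`: direct summands of direct products of copies of `C`. -/
def InProdClass (A : Type u) [Ring A] (C : Type u) [AddCommGroup C] [Module A C]
    (M : ModuleCat.{u} A) : Prop :=
  ∃ I : Type u, IsRetractOf A M (I → C)

/-- `Add(C)`: direct summands of direct sums of copies of `C`. -/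
def InAddClass (A : Type u) [Ring A] (C : Type u) [AddCommGroup C] [Module A C]
    (M : ModuleCat.{u} A) : Prop :=
  ∃ I : Type u, IsRetractOf A M (I →₀ C)

/-- `add(C)`: direct summands of finite direct sums of copies of `C`. -/
def InFinAddClass (A : Type u) [Ring A] (C : Type u) [AddCommGroup C] [Module A C]
    (M : ModuleCat.{u} A) : Prop :=
  ∃ k : ℕ, IsRetractOf A M (Fin k → C)

/-- `Q` is an injective cogenerator: `Q` is injective and every module embeds into a direct
product of copies of `Q`. -/
def IsInjectiveCogenerator (A : Type u) [Ring A] (Q : Type u) [AddCommGroup Q] [Module A Q] :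
    Prop :=
  Module.Injective A Q ∧
    ∀ (M : Type u) [AddCommGroup M] [Module A M],
      ∃ (I : Type u) (f : M →ₗ[A] (I → Q)), Function.Injective f

/-- `E` is the minimal injective cogenerator: it is an injective cogenerator which is a direct
summand of every injective cogenerator. -/
def IsMinimalInjectiveCogenerator (A : Type u) [Ring A] (E : Type u) [AddCommGroup E]
    [Module A E] : Prop :=
  IsInjectiveCogenerator A E ∧
    ∀ (Q : Type u) [AddCommGroup Q] [Module A Q],
      IsInjectiveCogenerator A Q → IsRetractOf A E Q

/-! ## Bimodules, homotheties, Wakamatsu tilting bimodules -/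

section Bimodules

variable (S R : Type u) [Ring S] [Ring R]
variable (T : Type u) [AddCommGroup T] [Module S T] [Module Rᵐᵒᵖ T] [SMulCommClass S Rᵐᵒᵖ T]

/-- The natural map `S → End(T_R)` given by the left `S`-action. -/
def leftHomothety : S → (T →ₗ[Rᵐᵒᵖ] T) := fun s =>
  { toFun := fun t => s • t
    map_add' := fun t t' => smul_add s t t'
    map_smul' := fun ρ t => smul_comm s ρ t }

/-- The natural map `R → End(_S T)` given by the right `R`-action. -/
def rightHomothety : R → (T →ₗ[S] T) := fun r =>
  { toFun := fun t => op r • t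
    map_add' := fun t t' => smul_add (op r) t t'
    map_smul' := fun s t => (smul_comm s (op r) t).symm }

/-- A Wakamatsu tilting `(S, R)`-bimodule: `T` admits resolutions by finitely generated
projectives on both sides, the natural maps `S → End(T_R)` and `R → End(_S T)` are
isomorphisms, and `Ext^i(T, T) = 0` on both sides for all `i ≥ 1`. -/
structure IsWakamatsuTilting : Prop where
  fgProjResR : HasFGProjResolution Rᵐᵒᵖ T
  fgProjResS : HasFGProjResolution S T
  bijS : Function.Bijective (leftHomothety S R T)
  bijR : Function.Bijective (rightHomothety S R T)
  extR : ExtVanishAll Rᵐᵒᵖ T T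
  extS : ExtVanishAll S T T

/-- An `(S, R)`-bimodule `T` is tensorly faithful if `T ⊗_R M = 0` implies `M = 0` and
`N ⊗_S T = 0` implies `N = 0`. -/
def IsTensorlyFaithful : Prop :=
  (∀ (M : Type u) [AddCommGroup M] [Module R M],
      Subsingleton (MTensor R T M) → Subsingleton M) ∧
  (∀ (N : Type u) [AddCommGroup N] [Module Sᵐᵒᵖ N],
      Subsingleton (MTensor S N T) → Subsingleton N)

/-- Membership in the Auslander class `𝒜_T(S)`. -/
structure InAuslanderClass (N : Type u) [AddCommGroup N] [Module Sᵐᵒᵖ N] : Prop where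
  torVanish : TorVanishAll S N T
  extVanish : ExtVanishAll Rᵐᵒᵖ T (MTensor S N T)
  thetaBij : Function.Bijective (MTensor.thetaFun S N T R)

/-- Membership in the Bass class `ℬ_T(R)`. -/
structure InBassClass (M : Type u) [AddCommGroup M] [Module Rᵐᵒᵖ M] : Prop where
  extVanish : ExtVanishAll Rᵐᵒᵖ T M
  torVanish : TorVanishAll S (T →ₗ[Rᵐᵒᵖ] M) T
  nuBij : Function.Bijective (MTensor.nuFun S R T M)

end Bimodules

/-! ## Cotilting and tilting modules -/

/-- A cotilting right `R`-module (Hügel–Coelho): finite injective dimension,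
`Ext^{i≥1}_R(Cᴵ, C) = 0` for every index set `I`, and there is a finite exact sequence
`0 → C_r → ⋯ → C_0 → Q → 0` with all `C_i ∈ Prod(C)` and `Q` an injective cogenerator. -/
structure IsCotilting (R : Type u) [Ring R] (C : Type u) [AddCommGroup C] [Module Rᵐᵒᵖ C] :
    Prop where
  finInjDim : ∃ n, InjDimLE Rᵐᵒᵖ C n
  extProdVanish : ∀ I : Type u, ExtVanishAll Rᵐᵒᵖ (I → C) C
  coresolution : ∃ (Q : ModuleCat.{u} Rᵐᵒᵖ) (r : ℕ),
    IsInjectiveCogenerator Rᵐᵒᵖ Q ∧ HasClassResolution Rᵐᵒᵖ (InProdClass Rᵐᵒᵖ C) r Q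

/-- An `n`-tilting right `R`-module (Miyashita). -/
structure IsNTilting (R : Type u) [Ring R] (T : Type u) [AddCommGroup T] [Module Rᵐᵒᵖ T]
    (n : ℕ) : Prop where
  fgProjRes : HasFGProjResolution Rᵐᵒᵖ T
  projDim : ProjDimLE Rᵐᵒᵖ T n
  extVanish : ExtVanishAll Rᵐᵒᵖ T T
  coresolution : HasClassCoresolution Rᵐᵒᵖ (InFinAddClass Rᵐᵒᵖ T) n (ModuleCat.of Rᵐᵒᵖ R)

/-- The data of a coresolution `0 → R → P 0 → P 1 → ⋯` of right `R`-modules. -/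
structure WakamatsuCoresolutionData (R : Type u) [Ring R] : Type (u + 1) where
  P : ℕ → Type u
  [instAdd : ∀ n, AddCommGroup (P n)]
  [instMod : ∀ n, Module Rᵐᵒᵖ (P n)]
  f0 : R →ₗ[Rᵐᵒᵖ] P 0
  d : ∀ n, P n →ₗ[Rᵐᵒᵖ] P (n + 1)

attribute [instance] WakamatsuCoresolutionData.instAdd WakamatsuCoresolutionData.instMod

/-- A Wakamatsu tilting right `R`-module: it admits a resolution by finitely generated
projective right `R`-modules, `Ext^{i≥1}_R(T, T) = 0`, and there is an exact sequence
`0 → R → T^0 → T^1 → ⋯` with each `T^i ∈ add(T)` and `Ext^1_R(Coker f, T) = 0` for every map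
`f` in this sequence. -/
def IsWakamatsuTiltingModule (R : Type u) [Ring R] (T : Type u) [AddCommGroup T]
    [Module Rᵐᵒᵖ T] : Prop :=
  HasFGProjResolution Rᵐᵒᵖ T ∧ ExtVanishAll Rᵐᵒᵖ T T ∧
    ∃ W : WakamatsuCoresolutionData R,
      Function.Injective W.f0 ∧ Function.Exact W.f0 (W.d 0) ∧
      (∀ n, Function.Exact (W.d n) (W.d (n + 1))) ∧
      (∀ n, InFinAddClass Rᵐᵒᵖ T (ModuleCat.of Rᵐᵒᵖ (W.P n))) ∧
      Ext1Vanishes Rᵐᵒᵖ ((W.P 0) ⧸ LinearMap.range W.f0) T ∧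
      (∀ n, Ext1Vanishes Rᵐᵒᵖ ((W.P (n + 1)) ⧸ LinearMap.range (W.d n)) T)

/-!
Characters turn `Tor` into `Ext`: `Tor_i(N, X)⁺ ≅ Ext^i(N, X⁺)`. For the cocycles `Z_j` of an exact
complex `C` of flat modules, `Ext^i(Z_j, X⁺)` depends only on `i - j`, and `(-)⁺` sends projective
modules to injective ones, so a finite projective resolution of `T` can be traded for a shift along
`C`; this gives `Tor_i(Z_j, T) = 0` for `i ≥ 1`. With a finite injective coresolution of `T`, the
exactness of `C ⊗ I` plays the same role.

Flat modules lie in the Auslander class because `N ⊗ Hom(Q, T) → Hom(Q, N ⊗ T)` is bijective for a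
finitely presented `Q`. The sequences `0 → Z_j → C_j → Z_{j+1} → 0` stay exact under `- ⊗ T`, and
pass from the `C_j` to all the `Z_j` the injectivity of `θ`, then its surjectivity, then the
vanishing of `Ext^1(T, Z_j ⊗ T)`, and finally that of the higher `Ext`.
-/

theorem exact_iff_of_equiv {A B C A' B' C' : Type*} [Zero C] [Zero C'] {f : A → B} {g : B → C}
    {f' : A' → B'} {g' : B' → C'} (eA : A ≃ A') (eB : B ≃ B') (eC : C ≃ C') (h0 : eC 0 = 0)
    (hf : ∀ a, eB (f a) = f' (eA a)) (hg : ∀ b, eC (g b) = g' (eB b)) :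
    Exact f g ↔ Exact f' g' := by
  refine eB.forall_congr fun {b} => ?_
  rw [← hg, ← h0, eC.apply_eq_iff_eq]
  refine iff_congr Iff.rfl (eA.exists_congr fun {a} => ?_)
  rw [← hf, eB.apply_eq_iff_eq]

section LinearMaps

variable {A : Type*} [Ring A] {X X' X'' Y : Type*} [AddCommGroup X] [Module A X]
  [AddCommGroup X'] [Module A X'] [AddCommGroup X''] [Module A X''] [AddCommGroup Y] [Module A Y]
  {f : X →ₗ[A] X'} {g : X' →ₗ[A] X''}

theorem exact_linearMap_comp_right (h : Exact f g) (hg : Surjective g) :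
    Exact (fun b : X'' →ₗ[A] Y => b.comp g) (fun a : X' →ₗ[A] Y => a.comp f) := by
  refine fun a => ⟨fun ha => ?_, ?_⟩
  · have hker : LinearMap.range f ≤ LinearMap.ker a := LinearMap.range_le_ker_iff.2 ha
    refine ⟨(Submodule.liftQ _ a hker).comp (h.linearEquivOfSurjective hg).symm.toLinearMap, ?_⟩
    ext x
    simp [h.linearEquivOfSurjective_symm_apply hg]
  · rintro ⟨b, rfl⟩
    exact (LinearMap.comp_assoc ..).trans (by rw [h.linearMap_comp_eq_zero, LinearMap.comp_zero])

theorem exact_linearMap_comp_left (h : Exact f g) (hf : Injective f) :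
    Exact (fun b : Y →ₗ[A] X => f.comp b) (fun a : Y →ₗ[A] X' => g.comp a) := by
  refine fun a => ⟨fun ha => ?_, ?_⟩
  · have hrange (y) : a y ∈ LinearMap.range f := (h (a y)).1 (LinearMap.congr_fun ha y)
    refine ⟨(LinearEquiv.ofInjective f hf).symm.toLinearMap ∘ₗ a.codRestrict _ hrange, ?_⟩
    ext y
    exact congrArg Subtype.val ((LinearEquiv.ofInjective f hf).apply_symm_apply ⟨a y, hrange y⟩)
  · rintro ⟨b, rfl⟩
    exact (LinearMap.comp_assoc ..).symm.trans
      (by rw [h.linearMap_comp_eq_zero, LinearMap.zero_comp])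

/-- The sequence `0 → X → X' → X'' → 0` of `A`-modules given by `f` and `g` is exact. -/
structure IsShortExact (f : X →ₗ[A] X') (g : X' →ₗ[A] X'') : Prop where
  injective : Injective f
  exact : Exact f g
  surjective : Surjective g

theorem isShortExact_subtype_ker (hg : Surjective g) :
    IsShortExact (LinearMap.ker g).subtype g :=
  ⟨Subtype.val_injective, LinearMap.exact_subtype_ker_map g, hg⟩

theorem isShortExact_mkQ_range (hf : Injective f) :
    IsShortExact f (LinearMap.range f).mkQ :=
  ⟨hf, LinearMap.exact_map_mkQ_range f, Submodule.mkQ_surjective _⟩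

end LinearMaps

/-! ### Vanishing of `Ext` -/

section Ext

open CategoryTheory Abelian

/-- `Ext^n_A(X, Y) = 0`, for Mathlib's `Ext` groups in the category of `A`-modules. -/
def ExtVanishAt (A : Type u) [Ring A] (X Y : Type u) [AddCommGroup X] [Module A X]
    [AddCommGroup Y] [Module A Y] (n : ℕ) : Prop :=
  ∀ e : Ext (ModuleCat.of A X) (ModuleCat.of A Y) n, e = 0

variable {A : Type u} [Ring A] {K P Q X Y : Type u} [AddCommGroup K] [Module A K]
  [AddCommGroup P] [Module A P] [AddCommGroup Q] [Module A Q] [AddCommGroup X] [Module A X]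
  [AddCommGroup Y] [Module A Y]

theorem extVanishAt_of_projective (hX : Module.Projective A X) (n : ℕ) :
    ExtVanishAt A X Y (n + 1) := by
  have : CategoryTheory.Projective (ModuleCat.of A X) := (IsProjective.iff_projective X).1 hX
  exact fun e => e.eq_zero_of_projective

theorem extVanishAt_of_injective (hY : Module.Injective A Y) (n : ℕ) :
    ExtVanishAt A X Y (n + 1) := by
  have : CategoryTheory.Injective (ModuleCat.of A Y) :=
    (Module.injective_iff_injective_object A Y).1 hY
  exact fun e => e.eq_zero_of_injective

namespace IsShortExact

variable {i : K →ₗ[A] P} {p : P →ₗ[A] X}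

theorem exists_shortExact (h : IsShortExact i p) :
    ∃ w, (ShortComplex.mk (ModuleCat.ofHom i) (ModuleCat.ofHom p) w).ShortExact :=
  ⟨by rw [← ModuleCat.ofHom_comp, h.exact.linearMap_comp_eq_zero]; rfl,
    ModuleCat.shortComplex_shortExact _ h.exact h.injective h.surjective⟩

theorem extVanishAt_fst_right (h : IsShortExact i p) {n : ℕ} (hK : ExtVanishAt A K Y n)
    (hP : ExtVanishAt A P Y (n + 1)) : ExtVanishAt A X Y (n + 1) := by
  intro e
  obtain ⟨w, hw⟩ := h.exists_shortExact
  obtain ⟨e', rfl⟩ := Ext.contravariant_sequence_exact₃ hw _ e (hP _) (add_comm 1 n)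
  rw [hK e', Ext.comp_zero]

theorem extVanishAt_fst_left (h : IsShortExact i p) {n : ℕ} (hP : ExtVanishAt A P Y n)
    (hX : ExtVanishAt A X Y (n + 1)) : ExtVanishAt A K Y n := by
  intro e
  obtain ⟨w, hw⟩ := h.exists_shortExact
  obtain ⟨e', rfl⟩ := Ext.contravariant_sequence_exact₁ hw _ e (add_comm 1 n) (hX _)
  rw [hP e', Ext.comp_zero]

theorem extVanishAt_snd_left (h : IsShortExact i p) {n : ℕ} (hX : ExtVanishAt A Y X n)
    (hP : ExtVanishAt A Y P (n + 1)) : ExtVanishAt A Y K (n + 1) := by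
  intro e
  obtain ⟨w, hw⟩ := h.exists_shortExact
  obtain ⟨e', rfl⟩ := Ext.covariant_sequence_exact₁ _ hw e (hP _) rfl
  rw [hX e', Ext.zero_comp]

theorem extVanishAt_snd_right (h : IsShortExact i p) {n : ℕ} (hP : ExtVanishAt A Y P n)
    (hK : ExtVanishAt A Y K (n + 1)) : ExtVanishAt A Y X n := by
  intro e
  obtain ⟨w, hw⟩ := h.exists_shortExact
  obtain ⟨e', rfl⟩ := Ext.covariant_sequence_exact₃ _ hw e rfl (hK _)
  rw [hP e', Ext.zero_comp]

theorem surjective_comp_right (h : IsShortExact i p) (hX : ExtVanishAt A X Y 1) :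
    Surjective fun b : P →ₗ[A] Y => b.comp i := by
  intro a
  obtain ⟨w, hw⟩ := h.exists_shortExact
  obtain ⟨e, he⟩ := Ext.contravariant_sequence_exact₁ hw _ (Ext.mk₀ (ModuleCat.ofHom a))
    (add_comm 1 0) (hX _)
  obtain ⟨b, rfl⟩ := (Ext.mk₀_bijective _ _).2 e
  rw [Ext.mk₀_comp_mk₀] at he
  exact ⟨b.hom, congrArg ModuleCat.Hom.hom ((Ext.mk₀_bijective _ _).1 he)⟩

theorem extVanishAt_one_of_surjective_comp_right (h : IsShortExact i p)
    (hP : ExtVanishAt A P Y 1) (hsurj : Surjective fun b : P →ₗ[A] Y => b.comp i) :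
    ExtVanishAt A X Y 1 := by
  intro e
  obtain ⟨w, hw⟩ := h.exists_shortExact
  obtain ⟨e', rfl⟩ := Ext.contravariant_sequence_exact₃ hw _ e (hP _) (add_comm 1 0)
  obtain ⟨a, rfl⟩ := (Ext.mk₀_bijective _ _).2 e'
  obtain ⟨b, hb⟩ := hsurj a.hom
  obtain rfl : ModuleCat.ofHom i ≫ ModuleCat.ofHom b = a := ModuleCat.hom_ext hb
  rw [← Ext.mk₀_comp_mk₀, ← Ext.comp_assoc_of_second_deg_zero, hw.extClass_comp]
  exact Ext.zero_comp ..

theorem extVanishAt_one_of_surjective_comp_left (h : IsShortExact i p)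
    (hP : ExtVanishAt A Y P 1) (hsurj : Surjective fun b : Y →ₗ[A] P => p.comp b) :
    ExtVanishAt A Y K 1 := by
  intro e
  obtain ⟨w, hw⟩ := h.exists_shortExact
  obtain ⟨e', rfl⟩ := Ext.covariant_sequence_exact₁ _ hw e (hP _) rfl
  obtain ⟨a, rfl⟩ := (Ext.mk₀_bijective _ _).2 e'
  obtain ⟨b, hb⟩ := hsurj a.hom
  obtain rfl : ModuleCat.ofHom b ≫ ModuleCat.ofHom p = a := ModuleCat.hom_ext hb
  rw [← Ext.mk₀_comp_mk₀, Ext.comp_assoc_of_second_deg_zero]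
  exact (congrArg (fun z => (Ext.mk₀ (ModuleCat.ofHom b)).comp z _) hw.comp_extClass).trans
    (Ext.comp_zero ..)

theorem exact_comp_iff_extVanishAt_one (h : IsShortExact i p) (hP : ExtVanishAt A P Y 1)
    {Q' : Type u} [AddCommGroup Q'] [Module A Q'] {d : Q' →ₗ[A] Q} {q : Q →ₗ[A] K}
    (hdq : Exact d q) (hq : Surjective q) :
    Exact (fun b : P →ₗ[A] Y => b.comp (i.comp q)) (fun c : Q →ₗ[A] Y => c.comp d) ↔
      ExtVanishAt A X Y 1 := by
  have hex := exact_linearMap_comp_right (Y := Y) hdq hq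
  refine ⟨fun H => h.extVanishAt_one_of_surjective_comp_right hP fun a => ?_, fun hX c => ?_⟩
  · obtain ⟨b, hb⟩ := (H (a.comp q)).1 ((hex _).2 ⟨a, rfl⟩)
    exact ⟨b, (LinearMap.cancel_right hq).1 hb⟩
  · rw [hex c]
    exact ((h.surjective_comp_right hX).range_comp fun a : K →ₗ[A] Y => a.comp q).symm ▸ Iff.rfl

end IsShortExact

end Ext

/-! ### Projective resolutions -/

section Resolutions

variable {A : Type u} [Ring A] {X : Type u} [AddCommGroup X] [Module A X]

open CategoryTheory in
theorem exists_isProjResolution (A : Type u) [Ring A] (X : Type u) [AddCommGroup X]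
    [Module A X] : ∃ Q : ResolutionData A X, Q.IsProjResolution := by
  let P := projectiveResolution (ModuleCat.of A X)
  refine ⟨⟨fun n => P.complex.X n, fun n => (P.complex.d (n + 1) n).hom, (P.π.f 0).hom⟩, ?_⟩
  exact
    { proj n := (IsProjective.iff_projective _).2 (P.projective n)
      surj := (ModuleCat.epi_iff_surjective _).1 inferInstance
      exact0 := (ShortComplex.ShortExact.moduleCat_exact_iff_function_exact _).1 P.exact₀
      exactSucc n :=
        (ShortComplex.ShortExact.moduleCat_exact_iff_function_exact _).1 (P.exact_succ n) }

namespace ResolutionData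

/-- The resolution of the first syzygy `ker ε` obtained by truncating `Q`. -/
def shift (Q : ResolutionData A X) (h : Exact (Q.d 0) Q.ε) :
    ResolutionData A (LinearMap.ker Q.ε) where
  P n := Q.P (n + 1)
  d n := Q.d (n + 1)
  ε := (Q.d 0).codRestrict _ h.apply_apply_eq_zero

namespace IsProjResolution

variable {Q : ResolutionData A X}

theorem shift (h : Q.IsProjResolution) : (Q.shift h.exact0).IsProjResolution where
  proj n := h.proj (n + 1)
  surj := by
    rintro ⟨x, hx⟩
    obtain ⟨y, rfl⟩ := (h.exact0 x).1 hx
    exact ⟨y, rfl⟩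
  exact0 x := Subtype.ext_iff.trans (h.exactSucc 0 x)
  exactSucc n := h.exactSucc (n + 1)

theorem exact_comp_iff_extVanishAt (h : Q.IsProjResolution) (Y : Type u) [AddCommGroup Y]
    [Module A Y] (j : ℕ) :
    Exact (fun f : Q.P j →ₗ[A] Y => f.comp (Q.d j))
      (fun f : Q.P (j + 1) →ₗ[A] Y => f.comp (Q.d (j + 1))) ↔ ExtVanishAt A X Y (j + 1) := by
  have hs := isShortExact_subtype_ker h.surj
  induction j generalizing X with
  | zero =>
    exact hs.exact_comp_iff_extVanishAt_one (extVanishAt_of_projective (h.proj 0) 0)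
      h.shift.exact0 h.shift.surj
  | succ j ih =>
    exact (ih h.shift (isShortExact_subtype_ker h.shift.surj)).trans
      ⟨fun H => hs.extVanishAt_fst_right H (extVanishAt_of_projective (h.proj 0) _),
        hs.extVanishAt_fst_left (extVanishAt_of_projective (h.proj 0) _)⟩

end IsProjResolution

end ResolutionData

theorem extVanishAll_iff_forall_extVanishAt {Y : Type u} [AddCommGroup Y] [Module A Y] :
    ExtVanishAll A X Y ↔ ∀ j, ExtVanishAt A X Y (j + 1) := by
  refine ⟨fun ⟨Q, hQ, h⟩ j => (hQ.exact_comp_iff_extVanishAt Y j).1 (h j), fun h => ?_⟩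
  obtain ⟨Q, hQ⟩ := exists_isProjResolution A X
  exact ⟨Q, hQ, fun j => (hQ.exact_comp_iff_extVanishAt Y j).2 (h j)⟩

end Resolutions

/-! ### Character modules -/

section Characters

variable {A B C : Type*} [AddCommGroup A] [AddCommGroup B] [AddCommGroup C]

theorem character_comp_surjective_iff {f : A →+ B} :
    Surjective (fun c : B →+ AddCircle (1 : ℚ) => c.comp f) ↔ Injective f :=
  CharacterModule.dual_surjective_iff_injective (f := f.toIntLinearMap)

theorem character_comp_exact_iff {f : A →+ B} {g : B →+ C} :
    Exact (fun c : C →+ AddCircle (1 : ℚ) => c.comp g) (fun c => c.comp f) ↔ Exact f g := by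
  refine ⟨fun h b => ⟨fun hb => ?_, ?_⟩, fun h c => ⟨fun hc => ?_, ?_⟩⟩
  · rw [← AddMonoidHom.coe_range, SetLike.mem_coe, ← QuotientAddGroup.eq_zero_iff]
    refine CharacterModule.eq_zero_of_character_apply fun c => ?_
    obtain ⟨c', hc'⟩ := (h (AddMonoidHom.comp c (QuotientAddGroup.mk' f.range))).1 <| by
      ext a
      exact (congrArg c ((QuotientAddGroup.eq_zero_iff _).2 ⟨a, rfl⟩)).trans (map_zero c)
    exact (DFunLike.congr_fun hc' b).symm.trans ((congrArg c' hb).trans (map_zero c'))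
  · rintro ⟨a, rfl⟩
    refine CharacterModule.eq_zero_of_character_apply fun c => ?_
    exact DFunLike.congr_fun (h.apply_apply_eq_zero c) a
  · have hker : g.ker ≤ c.ker := by
      intro b hb
      obtain ⟨a, rfl⟩ := (h b).1 hb
      exact DFunLike.congr_fun hc a
    obtain ⟨c', hc'⟩ := character_comp_surjective_iff.2 (QuotientAddGroup.kerLift_injective g)
      (QuotientAddGroup.lift g.ker c hker)
    exact ⟨c', AddMonoidHom.ext fun b => DFunLike.congr_fun hc' (QuotientAddGroup.mk b)⟩
  · rintro ⟨c', rfl⟩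
    ext a
    exact (congrArg c' (h.apply_apply_eq_zero a)).trans (map_zero c')

end Characters

section CharacterModules

variable {S : Type*} [Ring S] {X Y Z : Type*} [AddCommGroup X] [Module S X] [AddCommGroup Y]
  [Module S Y] [AddCommGroup Z] [Module S Z]

/-- The right action of `S` on the characters of a left `S`-module, `(c · s) x = c (s x)`. -/
instance characterModuleRightModule : Module Sᵐᵒᵖ (CharacterModule X) :=
  inferInstanceAs (Module Sᵈᵐᵃ (X →+ AddCircle (1 : ℚ)))

/-- The right `S`-linear map `c ↦ c ∘ g` on character modules induced by a left `S`-linear map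
`g`; over a noncommutative ring it replaces `CharacterModule.dual`. -/
def characterMap (g : X →ₗ[S] Y) : CharacterModule Y →ₗ[Sᵐᵒᵖ] CharacterModule X where
  toFun c := AddMonoidHom.comp c g.toAddMonoidHom
  map_add' _ _ := rfl
  map_smul' s c := AddMonoidHom.ext fun x => congrArg c (g.map_smul s.unop x).symm

theorem exact_characterMap {f : X →ₗ[S] Y} {g : Y →ₗ[S] Z} (h : Exact f g) :
    Exact (characterMap g) (characterMap f) :=
  character_comp_exact_iff.2 h

theorem IsShortExact.characterMap {f : X →ₗ[S] Y} {g : Y →ₗ[S] Z} (h : IsShortExact f g) :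
    IsShortExact (characterMap g) (characterMap f) where
  injective := CharacterModule.dual_injective_of_surjective g.toAddMonoidHom.toIntLinearMap
    h.surjective
  exact := exact_characterMap h.exact
  surjective := character_comp_surjective_iff.2 h.injective

/-- The left action of `S` on the characters of a right `S`-module, `(s · c) m = c (m s)`. -/
abbrev characterModuleLeftModule (S M : Type*) [Ring S] [AddCommGroup M] [Module Sᵐᵒᵖ M] :
    Module S (CharacterModule M) :=
  Module.compHom _ (RingEquiv.opOp S).toRingHom

-- A map `M → X⁺` is the same as a map `X → M⁺`, which lifts along the surjection `M'⁺ → M⁺`.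
theorem injective_characterModule_of_projective {S : Type u} [Ring S] {X : Type u}
    [AddCommGroup X] [Module S X] (hX : Module.Projective S X) :
    Module.Injective Sᵐᵒᵖ (CharacterModule X) where
  out M M' _ _ _ _ f hf a := by
    let := characterModuleLeftModule S M
    let := characterModuleLeftModule S M'
    let g : CharacterModule M' →ₗ[S] CharacterModule M :=
      { toFun := characterMap f
        map_add' := map_add _
        map_smul' s := (characterMap f).map_smul (op (op s)) }
    let a' : X →ₗ[S] CharacterModule M :=
      { toFun := AddMonoidHom.flip (P := AddCircle (1 : ℚ)) a.toAddMonoidHom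
        map_add' := map_add _
        map_smul' s x :=
          AddMonoidHom.ext fun m => (DFunLike.congr_fun (a.map_smul (op s) m) x).symm }
    obtain ⟨b', hb'⟩ := Module.projective_lifting_property g a'
      (character_comp_surjective_iff (f := f.toAddMonoidHom).2 hf)
    let b : M' →ₗ[Sᵐᵒᵖ] CharacterModule X :=
      { toFun := AddMonoidHom.flip (P := AddCircle (1 : ℚ)) b'.toAddMonoidHom
        map_add' := map_add _
        map_smul' s m :=
          AddMonoidHom.ext fun x => (DFunLike.congr_fun (b'.map_smul s.unop x) m).symm }
    exact ⟨b, fun m => AddMonoidHom.ext fun x => DFunLike.congr_fun (LinearMap.congr_fun hb' x) m⟩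

end CharacterModules

/-! ### The tensor product and its characters -/

namespace MTensor

section Lift

variable {S : Type u} [Ring S] {N : Type u} [AddCommGroup N] [Module Sᵐᵒᵖ N]
  {X : Type u} [AddCommGroup X] [Module S X]

theorem mk_add_left (n n' : N) (x : X) :
    (mk (n + n') x : MTensor S N X) = mk n x + mk n' x :=
  congrArg _ (TensorProduct.tmul_add x n n')

theorem mk_smul (s : S) (n : N) (x : X) :
    (mk (op s • n) x : MTensor S N X) = mk n (s • x) :=
  have h : (s • x) ⊗ₜ[ℤ] n - x ⊗ₜ[ℤ] (op s • n) ∈ mtRel S N X :=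
    AddSubgroup.subset_closure ⟨s, x, n, rfl⟩
  (QuotientAddGroup.eq_iff_sub_mem.2 h).symm

/-- The balanced pairing `(n, x) ↦ n ⊗ x` as a biadditive map. -/
def mkHom (S N X : Type u) [Ring S] [AddCommGroup N] [Module Sᵐᵒᵖ N] [AddCommGroup X]
    [Module S X] : N →+ X →+ MTensor S N X :=
  AddMonoidHom.mk' (fun n => AddMonoidHom.mk' (mk n) (mk_add_right n))
    fun n n' => AddMonoidHom.ext (mk_add_left n n')

/-- The additive map on `N ⊗_S X` induced by a balanced biadditive map. -/
def lift {A : Type*} [AddCommGroup A] (f : N →+ X →+ A)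
    (hf : ∀ (s : S) n x, f (op s • n) x = f n (s • x)) : MTensor S N X →+ A :=
  QuotientAddGroup.lift _ (TensorProduct.liftAddHom f.flip fun z x n => by simp) <| by
    refine (AddSubgroup.closure_le _).2 ?_
    rintro _ ⟨s, x, n, rfl⟩
    simp [hf]

theorem induction_on {p : MTensor S N X → Prop} (z : MTensor S N X) (zero : p 0)
    (mk : ∀ n x, p (mk n x)) (add : ∀ z z', p z → p z' → p (z + z')) : p z := by
  obtain ⟨w, rfl⟩ := QuotientAddGroup.mk_surjective z
  induction w using TensorProduct.induction_on with
  | zero => exact zero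
  | tmul x n => exact mk n x
  | add w w' hw hw' => exact add _ _ hw hw'

theorem addHom_ext {A : Type*} [AddCommGroup A] {f g : MTensor S N X →+ A}
    (h : ∀ n x, f (mk n x) = g (mk n x)) : f = g := by
  ext z
  induction z using induction_on with
  | zero => rw [map_zero, map_zero]
  | mk n x => exact h n x
  | add z z' hz hz' => rw [map_add, map_add, hz, hz']

/-- The tensor-hom adjunction `(N ⊗_S X)⁺ ≃ Hom_S(N, X⁺)`. -/
def characterEquiv :
    (MTensor S N X →+ AddCircle (1 : ℚ)) ≃ (N →ₗ[Sᵐᵒᵖ] CharacterModule X) where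
  toFun c :=
    { toFun n := c.comp (mkHom S N X n)
      map_add' n n' := by rw [map_add]; exact AddMonoidHom.comp_add ..
      map_smul' s n := AddMonoidHom.ext fun x => congrArg c (mk_smul s.unop n x) }
  invFun a := lift a.toAddMonoidHom fun s n x => DFunLike.congr_fun (a.map_smul (op s) n) x
  left_inv _ := addHom_ext fun _ _ => rfl
  right_inv _ := rfl

end Lift

section Exactness

variable {S : Type u} [Ring S] {N N' N'' : Type u} [AddCommGroup N] [Module Sᵐᵒᵖ N]
  [AddCommGroup N'] [Module Sᵐᵒᵖ N'] [AddCommGroup N''] [Module Sᵐᵒᵖ N'']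
  {X Y Z : Type u} [AddCommGroup X] [Module S X] [AddCommGroup Y] [Module S Y]
  [AddCommGroup Z] [Module S Z]

theorem map_injective_iff {f : N →ₗ[Sᵐᵒᵖ] N'} :
    Injective (map (T := X) f) ↔
      Surjective fun b : N' →ₗ[Sᵐᵒᵖ] CharacterModule X => b.comp f :=
  character_comp_surjective_iff.symm.trans <|
    (EquivLike.comp_surjective _ characterEquiv).symm.trans <|
      EquivLike.surjective_comp characterEquiv fun b : N' →ₗ[Sᵐᵒᵖ] CharacterModule X => b.comp f

theorem lmap_injective_iff {f : X →ₗ[S] Y} :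
    Injective (lmap (N := N) f) ↔
      Surjective fun b : N →ₗ[Sᵐᵒᵖ] CharacterModule Y => (characterMap f).comp b :=
  character_comp_surjective_iff.symm.trans <|
    (EquivLike.comp_surjective _ characterEquiv).symm.trans <|
      EquivLike.surjective_comp characterEquiv ((characterMap f).comp ·)

theorem map_exact_iff {f : N →ₗ[Sᵐᵒᵖ] N'} {g : N' →ₗ[Sᵐᵒᵖ] N''} :
    Exact (map (T := X) f) (map (T := X) g) ↔
      Exact (fun c : N'' →ₗ[Sᵐᵒᵖ] CharacterModule X => c.comp g)
        (fun b : N' →ₗ[Sᵐᵒᵖ] CharacterModule X => b.comp f) :=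
  character_comp_exact_iff.symm.trans <|
    exact_iff_of_equiv characterEquiv characterEquiv characterEquiv rfl
      (fun _ => rfl) fun _ => rfl

theorem lmap_exact_iff {f : X →ₗ[S] Y} {g : Y →ₗ[S] Z} :
    Exact (lmap (N := N) f) (lmap (N := N) g) ↔
      Exact (fun c : N →ₗ[Sᵐᵒᵖ] CharacterModule Z => (characterMap g).comp c)
        (fun b : N →ₗ[Sᵐᵒᵖ] CharacterModule Y => (characterMap f).comp b) :=
  character_comp_exact_iff.symm.trans <|
    exact_iff_of_equiv characterEquiv characterEquiv characterEquiv rfl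
      (fun _ => rfl) fun _ => rfl

theorem map_exact {f : N →ₗ[Sᵐᵒᵖ] N'} {g : N' →ₗ[Sᵐᵒᵖ] N''} (h : Exact f g)
    (hg : Surjective g) : Exact (map (T := X) f) (map (T := X) g) :=
  map_exact_iff.2 (exact_linearMap_comp_right h hg)

theorem lmap_exact {f : X →ₗ[S] Y} {g : Y →ₗ[S] Z} (h : Exact f g) (hg : Surjective g) :
    Exact (lmap (N := N) f) (lmap (N := N) g) :=
  lmap_exact_iff.2 <| exact_linearMap_comp_left (exact_characterMap h) <|
    CharacterModule.dual_injective_of_surjective g.toAddMonoidHom.toIntLinearMap hg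

theorem map_surjective {g : N →ₗ[Sᵐᵒᵖ] N'} (hg : Surjective g) :
    Surjective (map (T := X) g) := by
  intro z
  induction z using induction_on with
  | zero => exact ⟨0, map_zero _⟩
  | mk n' x =>
    obtain ⟨n, rfl⟩ := hg n'
    exact ⟨mk n x, rfl⟩
  | add z z' hz hz' =>
    obtain ⟨w, rfl⟩ := hz
    obtain ⟨w', rfl⟩ := hz'
    exact ⟨w + w', map_add _ _ _⟩

end Exactness

end MTensor

theorem torVanishAll_iff_forall_extVanishAt {S : Type u} [Ring S] {N : Type u} [AddCommGroup N]
    [Module Sᵐᵒᵖ N] {X : Type u} [AddCommGroup X] [Module S X] :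
    TorVanishAll S N X ↔ ∀ i, ExtVanishAt Sᵐᵒᵖ N (CharacterModule X) (i + 1) :=
  Iff.trans ⟨fun ⟨Q, hQ, h⟩ => ⟨Q, hQ, fun j => MTensor.map_exact_iff.1 (h j)⟩,
    fun ⟨Q, hQ, h⟩ => ⟨Q, hQ, fun j => MTensor.map_exact_iff.2 (h j)⟩⟩
    extVanishAll_iff_forall_extVanishAt

/-! ### Flat modules and exact complexes of flat modules -/

section Flat

variable {S : Type u} [Ring S]

namespace IsFlatRightModule

variable {N : Type u} [AddCommGroup N] [Module Sᵐᵒᵖ N]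

theorem lmap_exact (hN : IsFlatRightModule S N) {X Y Z : Type u} [AddCommGroup X] [Module S X]
    [AddCommGroup Y] [Module S Y] [AddCommGroup Z] [Module S Z] {f : X →ₗ[S] Y} {g : Y →ₗ[S] Z}
    (h : Exact f g) : Exact (MTensor.lmap (N := N) f) (MTensor.lmap (N := N) g) := by
  have hr : Exact f g.rangeRestrict := fun y => Subtype.ext_iff.trans (h y)
  have hg : (MTensor.lmap (LinearMap.range g).subtype).comp (MTensor.lmap g.rangeRestrict) =
      MTensor.lmap (N := N) g :=
    MTensor.addHom_ext fun _ _ => rfl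
  have hi := hN _ _ (LinearMap.range g).subtype Subtype.val_injective
  rw [← hg]
  exact (MTensor.lmap_exact hr g.surjective_rangeRestrict).comp_injective _ hi (map_zero _)

theorem extVanishAt_characterModule (hN : IsFlatRightModule S N) (X : Type u) [AddCommGroup X]
    [Module S X] (i : ℕ) : ExtVanishAt Sᵐᵒᵖ N (CharacterModule X) (i + 1) := by
  have hs (Y : Type u) [AddCommGroup Y] [Module S Y] :=
    isShortExact_subtype_ker (Finsupp.linearCombination_id_surjective S Y)
  have hfree (Y : Type u) [AddCommGroup Y] [Module S Y] (n) :
      ExtVanishAt Sᵐᵒᵖ N (CharacterModule (Y →₀ S)) (n + 1) :=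
    extVanishAt_of_injective (injective_characterModule_of_projective inferInstance) n
  induction i generalizing X with
  | zero =>
    exact (hs X).characterMap.extVanishAt_one_of_surjective_comp_left (hfree X 0)
      (MTensor.lmap_injective_iff.1 (hN _ _ _ (hs X).injective))
  | succ i ih => exact (hs X).characterMap.extVanishAt_snd_left (ih _) (hfree X _)

end IsFlatRightModule

end Flat

namespace ZComplex.IsExact

section ToKer

variable {A : Type u} [Ring A] {C : ZComplex A}

/-- The corestriction of the differential `C.d j` to the next kernel. -/
def toKer (h : C.IsExact) (j : ℤ) : C.P j →ₗ[A] LinearMap.ker (C.d (j + 1)) :=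
  (C.d j).codRestrict _ (h j).apply_apply_eq_zero

theorem isShortExact (h : C.IsExact) {j : ℤ} {M : Type u} [AddCommGroup M] [Module A M]
    (e : M ≃ₗ[A] LinearMap.ker (C.d j)) :
    IsShortExact ((LinearMap.ker (C.d j)).subtype ∘ₗ e.toLinearMap) (h.toKer j) where
  injective := Subtype.val_injective.comp e.injective
  exact x := by
    rw [LinearMap.coe_comp, LinearEquiv.coe_coe, e.surjective.range_comp,
      ← LinearMap.exact_subtype_ker_map (C.d j) x]
    exact Subtype.ext_iff
  surjective := by
    rintro ⟨x, hx⟩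
    obtain ⟨y, rfl⟩ := (h j x).1 hx
    exact ⟨y, rfl⟩

end ToKer

section Cocycles

variable {S : Type u} [Ring S] {C : ZComplex Sᵐᵒᵖ} {X : Type u} [AddCommGroup X] [Module S X]

theorem extVanishAt_ker_succ_iff (h : C.IsExact) (hF : ∀ i, IsFlatRightModule S (C.P i))
    (j : ℤ) (n : ℕ) :
    ExtVanishAt Sᵐᵒᵖ (LinearMap.ker (C.d (j + 1))) (CharacterModule X) (n + 1 + 1) ↔
      ExtVanishAt Sᵐᵒᵖ (LinearMap.ker (C.d j)) (CharacterModule X) (n + 1) :=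
  have hs := h.isShortExact (.refl _ (LinearMap.ker (C.d j)))
  ⟨hs.extVanishAt_fst_left ((hF j).extVanishAt_characterModule X n),
    fun H => hs.extVanishAt_fst_right H ((hF j).extVanishAt_characterModule X (n + 1))⟩

theorem extVanishAt_ker_of_exact_map (h : C.IsExact) (hF : ∀ i, IsFlatRightModule S (C.P i))
    (hX : ∀ i, Exact (MTensor.map (T := X) (C.d i)) (MTensor.map (T := X) (C.d (i + 1))))
    (n : ℕ) (j : ℤ) :
    ExtVanishAt Sᵐᵒᵖ (LinearMap.ker (C.d j)) (CharacterModule X) (n + 1) := by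
  induction n generalizing j with
  | zero =>
    obtain ⟨k, rfl⟩ : ∃ k, j = k + 1 + 1 + 1 := ⟨j - 1 - 1 - 1, by ring⟩
    have hk (i) := h.isShortExact (.refl _ (LinearMap.ker (C.d i)))
    have hdq : Exact (C.d k) (h.toKer (k + 1)) := fun x => Subtype.ext_iff.trans (h k x)
    exact ((hk (k + 1 + 1)).exact_comp_iff_extVanishAt_one
      ((hF _).extVanishAt_characterModule X 0) hdq (hk (k + 1)).surjective).1
        (MTensor.map_exact_iff.1 (hX k))
  | succ n ih =>
    obtain ⟨k, rfl⟩ : ∃ k, j = k + 1 := ⟨j - 1, by ring⟩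
    exact (h.extVanishAt_ker_succ_iff hF k n).2 (ih k)

theorem extVanishAt_ker_of_projDimLE (h : C.IsExact) (hF : ∀ i, IsFlatRightModule S (C.P i))
    {m : ℕ} (hX : ProjDimLE S X m) (n : ℕ) (j : ℤ) :
    ExtVanishAt Sᵐᵒᵖ (LinearMap.ker (C.d j)) (CharacterModule X) (n + 1) := by
  induction m generalizing X n j with
  | zero => exact extVanishAt_of_injective (injective_characterModule_of_projective hX) n
  | succ m ih =>
    obtain ⟨p, hP, hK⟩ := hX
    exact (h.extVanishAt_ker_succ_iff hF j n).1 <|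
      (isShortExact_subtype_ker p.surj).characterMap.extVanishAt_snd_left (ih hK n (j + 1))
        (extVanishAt_of_injective (injective_characterModule_of_projective hP) _)

theorem extVanishAt_ker_of_injDimLE (h : C.IsExact) (hF : ∀ i, IsFlatRightModule S (C.P i))
    (hI : ∀ (I : Type u) [AddCommGroup I] [Module S I], Module.Injective S I →
      ∀ i, Exact (MTensor.map (T := I) (C.d i)) (MTensor.map (T := I) (C.d (i + 1))))
    {m : ℕ} (hX : InjDimLE S X m) (n : ℕ) (j : ℤ) :
    ExtVanishAt Sᵐᵒᵖ (LinearMap.ker (C.d j)) (CharacterModule X) (n + 1) := by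
  induction m generalizing X n j with
  | zero => exact h.extVanishAt_ker_of_exact_map hF (hI X hX) n j
  | succ m ih =>
    obtain ⟨p, hE, hQ⟩ := hX
    exact (isShortExact_mkQ_range p.inj).characterMap.extVanishAt_snd_right
      (h.extVanishAt_ker_of_exact_map hF (hI p.E hE) n j) (ih hQ (n + 1) j)

end Cocycles

end ZComplex.IsExact

/-! ### Tensor evaluation -/

theorem MTensor.mk_bijective_of_smul_bijective {S : Type u} [Ring S] (N : Type u)
    [AddCommGroup N] [Module Sᵐᵒᵖ N] {X : Type u} [AddCommGroup X] [Module S X] {x₀ : X}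
    (h : Bijective fun s : S => s • x₀) : Bijective fun n : N => (mk n x₀ : MTensor S N X) := by
  let e : S ≃ₗ[S] X := .ofBijective (.toSpanSingleton S X x₀) h
  let ψ : MTensor S N X →+ N := lift
    (AddMonoidHom.mk' (fun n => AddMonoidHom.mk' (fun x => op (e.symm x) • n)
        fun x x' => by rw [map_add, op_add, add_smul])
      fun n n' => AddMonoidHom.ext fun x => smul_add _ n n')
    fun s n x => by
      change op (e.symm x) • op s • n = op (e.symm (s • x)) • n
      rw [map_smul, smul_eq_mul, op_mul, mul_smul]
  have he (x) : e.symm x • x₀ = x := e.apply_symm_apply x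
  have hx₀ : e.symm x₀ = 1 := e.symm_apply_eq.2 (one_smul S x₀).symm
  refine bijective_iff_has_inverse.2 ⟨ψ, fun n => ?_, fun z => ?_⟩
  · change op (e.symm x₀) • n = n
    rw [hx₀, op_one, one_smul]
  · induction z using induction_on with
    | zero => rw [map_zero]; exact map_zero ((mkHom S N X).flip x₀)
    | mk n x =>
      change mk (op (e.symm x) • n) x₀ = mk n x
      rw [mk_smul, he]
    | add z z' hz hz' =>
      rw [map_add]
      exact (mk_add_left _ _ x₀).trans (congrArg₂ (· + ·) hz hz')

theorem exists_sum_smul_eq_of_projective {A Q : Type*} [Ring A] [AddCommGroup Q] [Module A Q]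
    (hQ : Module.Projective A Q) (hfin : Module.Finite A Q) :
    ∃ (n : ℕ) (b : Fin n → Q) (φ : Fin n → Q →ₗ[A] A), ∀ q, ∑ i, φ i q • b i = q := by
  obtain ⟨n, f, g, -, -, hfg⟩ := Module.Finite.exists_comp_eq_id_of_projective A Q
  refine ⟨n, fun i => f (Pi.basisFun A _ i), fun i => .proj i ∘ₗ g, fun q => ?_⟩
  simp_rw [← map_smul, ← map_sum]
  refine (congrArg f ?_).trans (LinearMap.congr_fun hfg q)
  exact (Pi.basisFun A (Fin n)).sum_repr (g q)

section TensorEvaluation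

attribute [local instance] SMulCommClass.symm

variable {S R : Type u} [Ring S] [Ring R] {T : Type u} [AddCommGroup T] [Module S T]
  [Module Rᵐᵒᵖ T] [SMulCommClass S Rᵐᵒᵖ T] {N : Type u} [AddCommGroup N] [Module Sᵐᵒᵖ N]
  {Q Q' X : Type u} [AddCommGroup Q] [Module Rᵐᵒᵖ Q] [AddCommGroup Q'] [Module Rᵐᵒᵖ Q']
  [AddCommGroup X] [Module Rᵐᵒᵖ X]

variable (S R T N Q) in
/-- The natural map `N ⊗_S Hom_R(Q, T) → Hom_R(Q, N ⊗_S T)`, `n ⊗ h ↦ (q ↦ n ⊗ h q)`. -/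
def tensorEval : MTensor S N (Q →ₗ[Rᵐᵒᵖ] T) →+ (Q →ₗ[Rᵐᵒᵖ] MTensor S N T) :=
  MTensor.lift
    (AddMonoidHom.mk' (fun n => AddMonoidHom.mk' (fun h => (MTensor.theta R n).comp h)
        fun h h' => LinearMap.comp_add h h' _)
      fun n n' => AddMonoidHom.ext fun h => LinearMap.ext fun q => MTensor.mk_add_left n n' (h q))
    fun s n h => LinearMap.ext fun q => MTensor.mk_smul s n (h q)

theorem tensorEval_lmap_lcomp (d : Q' →ₗ[Rᵐᵒᵖ] Q) (z : MTensor S N (Q →ₗ[Rᵐᵒᵖ] T)) :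
    tensorEval S R T N Q' (MTensor.lmap (d.lcomp S T) z) = (tensorEval S R T N Q z).comp d := by
  induction z using MTensor.induction_on with
  | zero => simp only [map_zero, LinearMap.zero_comp]
  | mk n h => rfl
  | add z z' hz hz' => simp only [map_add, LinearMap.add_comp, hz, hz']

/-- The `S`-linear map `T → Hom_R(Q, T)`, `t ↦ (q ↦ φ q • t)`, given by a functional `φ` on
`Q`. -/
def smulRightLinear (S : Type u) [Ring S] (T : Type u) [AddCommGroup T] [Module S T]
    [Module Rᵐᵒᵖ T] [SMulCommClass S Rᵐᵒᵖ T] (φ : Q →ₗ[Rᵐᵒᵖ] Rᵐᵒᵖ) :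
    T →ₗ[S] (Q →ₗ[Rᵐᵒᵖ] T) where
  toFun := φ.smulRight
  map_add' t t' := LinearMap.ext fun q => smul_add (φ q) t t'
  map_smul' s t := LinearMap.ext fun q => smul_comm (φ q) s t

theorem tensorEval_lmap_smulRightLinear (φ : Q →ₗ[Rᵐᵒᵖ] Rᵐᵒᵖ) (z : MTensor S N T) (q : Q) :
    tensorEval S R T N Q (MTensor.lmap (smulRightLinear S T φ) z) q = φ q • z := by
  induction z using MTensor.induction_on with
  | zero => simp only [map_zero, LinearMap.zero_apply, smul_zero]
  | mk n t => exact (MTensor.smul_mk R (φ q) n t).symm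
  | add z z' hz hz' => simp only [map_add, LinearMap.add_apply, smul_add, hz, hz']

theorem tensorEval_bijective_of_projective (hQ : Module.Projective Rᵐᵒᵖ Q)
    (hfin : Module.Finite Rᵐᵒᵖ Q) : Bijective (tensorEval S R T N Q) := by
  obtain ⟨m, b, φ, hb⟩ := exists_sum_smul_eq_of_projective hQ hfin
  refine bijective_iff_has_inverse.2
    ⟨fun g => ∑ i, MTensor.lmap (smulRightLinear S T (φ i)) (g (b i)), fun z => ?_, fun g => ?_⟩
  · induction z using MTensor.induction_on with
    | zero => simp only [map_zero, LinearMap.zero_apply, Finset.sum_const_zero]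
    | mk n h =>
      have hh : ∑ i, smulRightLinear S T (φ i) (h (b i)) = h := by
        ext q
        simpa [smulRightLinear] using congrArg h (hb q)
      exact (map_sum (MTensor.mkHom S N (Q →ₗ[Rᵐᵒᵖ] T) n) _ _).symm.trans
        (congrArg (MTensor.mk n) hh)
    | add z z' hz hz' =>
      simpa only [map_add, LinearMap.add_apply, Finset.sum_add_distrib] using
        congrArg₂ (· + ·) hz hz'
  · ext q
    simp only [map_sum, LinearMap.sum_apply, tensorEval_lmap_smulRightLinear]
    simpa only [map_sum, map_smul] using congrArg g (hb q)

namespace IsFlatRightModule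

theorem tensorEval_bijective (hN : IsFlatRightModule S N) {d : Q' →ₗ[Rᵐᵒᵖ] Q}
    {p : Q →ₗ[Rᵐᵒᵖ] X} (hdp : Exact d p) (hp : Surjective p)
    (hQ : Bijective (tensorEval S R T N Q)) (hQ' : Injective (tensorEval S R T N Q')) :
    Bijective (tensorEval S R T N X) := by
  refine ⟨fun z z' h => ?_, fun g => ?_⟩
  · refine hN _ _ (p.lcomp S T) (p.lcomp_injective_of_surjective hp) (hQ.1 ?_)
    rw [tensorEval_lmap_lcomp, tensorEval_lmap_lcomp, h]
  · obtain ⟨w, hw⟩ := hQ.2 (g.comp p)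
    have hw0 : MTensor.lmap (d.lcomp S T) w = 0 := by
      refine hQ' ?_
      rw [tensorEval_lmap_lcomp, hw, LinearMap.comp_assoc, hdp.linearMap_comp_eq_zero,
        LinearMap.comp_zero, map_zero]
    have hex : Exact (p.lcomp S T) (d.lcomp S T) := exact_linearMap_comp_right hdp hp
    obtain ⟨z, rfl⟩ := (hN.lmap_exact hex w).1 hw0
    rw [tensorEval_lmap_lcomp] at hw
    exact ⟨z, (LinearMap.cancel_right hp).1 hw⟩

theorem thetaFun_bijective (hN : IsFlatRightModule S N) (hT : HasFGProjResolution Rᵐᵒᵖ T)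
    (hS : Bijective (leftHomothety S R T)) : Bijective (MTensor.thetaFun S N T R) := by
  obtain ⟨Q, hQ, hfin⟩ := hT
  have hev (n) : Bijective (tensorEval S R T N (Q.P n)) :=
    tensorEval_bijective_of_projective (hQ.proj n) (hfin n)
  exact (hN.tensorEval_bijective hQ.exact0 hQ.surj (hev 0) (hev 1).1).comp
    (MTensor.mk_bijective_of_smul_bijective N (x₀ := (LinearMap.id : T →ₗ[Rᵐᵒᵖ] T)) hS)

theorem extVanishAll_tensor (hN : IsFlatRightModule S N) (hT : HasFGProjResolution Rᵐᵒᵖ T)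
    (hext : ExtVanishAll Rᵐᵒᵖ T T) : ExtVanishAll Rᵐᵒᵖ T (MTensor S N T) := by
  obtain ⟨Q, hQ, hfin⟩ := hT
  let ev (n) : MTensor S N (Q.P n →ₗ[Rᵐᵒᵖ] T) ≃ (Q.P n →ₗ[Rᵐᵒᵖ] MTensor S N T) :=
    .ofBijective _ (tensorEval_bijective_of_projective (hQ.proj n) (hfin n))
  have hex (j) : Exact ((Q.d j).lcomp S T) ((Q.d (j + 1)).lcomp S T) :=
    (hQ.exact_comp_iff_extVanishAt T j).2 (extVanishAll_iff_forall_extVanishAt.1 hext j)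
  exact ⟨Q, hQ, fun j =>
    (exact_iff_of_equiv (ev j) (ev (j + 1)) (ev (j + 1 + 1)) (map_zero (tensorEval S R T N _))
      (tensorEval_lmap_lcomp _) (tensorEval_lmap_lcomp _)).1 (hN.lmap_exact (hex j))⟩

theorem inAuslanderClass (hN : IsFlatRightModule S N) (hT : HasFGProjResolution Rᵐᵒᵖ T)
    (hS : Bijective (leftHomothety S R T)) (hext : ExtVanishAll Rᵐᵒᵖ T T) :
    InAuslanderClass S R T N where
  torVanish := torVanishAll_iff_forall_extVanishAt.2 (hN.extVanishAt_characterModule T)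
  extVanish := hN.extVanishAll_tensor hT hext
  thetaBij := hN.thetaFun_bijective hT hS

end IsFlatRightModule

end TensorEvaluation

/-! ### The Auslander class and short exact sequences -/

section AuslanderClass

variable {S R : Type u} [Ring S] [Ring R] {T : Type u} [AddCommGroup T] [Module S T]
  [Module Rᵐᵒᵖ T] [SMulCommClass S Rᵐᵒᵖ T] {M F B : Type u} [AddCommGroup M] [Module Sᵐᵒᵖ M]
  [AddCommGroup F] [Module Sᵐᵒᵖ F] [AddCommGroup B] [Module Sᵐᵒᵖ B]
  {f : M →ₗ[Sᵐᵒᵖ] F} {g : F →ₗ[Sᵐᵒᵖ] B}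

variable (R T) in
/-- `MTensor.map` as an `R`-linear map `M ⊗_S T → F ⊗_S T`. -/
def MTensor.mapR (f : M →ₗ[Sᵐᵒᵖ] F) : MTensor S M T →ₗ[Rᵐᵒᵖ] MTensor S F T where
  toFun := map f
  map_add' := map_add _
  map_smul' ρ := DFunLike.congr_fun <|
    addHom_ext (f := (map f).comp (DistribSMul.toAddMonoidHom _ ρ))
      (g := (DistribSMul.toAddMonoidHom _ ρ).comp (map f)) fun m t =>
        (congrArg (map f) (smul_mk R ρ m t)).trans (smul_mk R ρ (f m) t).symm

theorem thetaFun_injective_of_injective (hf : Injective f)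
    (hF : Injective (MTensor.thetaFun S F T R)) : Injective (MTensor.thetaFun S M T R) :=
  fun _ _ h => hf <| hF <| congrArg (MTensor.mapR R T f).comp h

namespace IsShortExact

variable (R) in
theorem mapR (h : IsShortExact f g) (hB : TorVanishAll S B T) :
    IsShortExact (MTensor.mapR R T f) (MTensor.mapR R T g) where
  injective := MTensor.map_injective_iff.2 <|
    h.surjective_comp_right (torVanishAll_iff_forall_extVanishAt.1 hB 0)
  exact := MTensor.map_exact h.exact h.surjective
  surjective := MTensor.map_surjective h.surjective

theorem torVanishAll_left (h : IsShortExact f g) (hF : TorVanishAll S F T)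
    (hB : TorVanishAll S B T) : TorVanishAll S M T := by
  rw [torVanishAll_iff_forall_extVanishAt] at hF hB ⊢
  exact fun i => h.extVanishAt_fst_left (hF i) (hB (i + 1))

theorem thetaFun_surjective (h : IsShortExact f g) (hB : TorVanishAll S B T)
    (hθF : Surjective (MTensor.thetaFun S F T R)) (hθB : Injective (MTensor.thetaFun S B T R)) :
    Surjective (MTensor.thetaFun S M T R) := by
  intro a
  have hT := h.mapR R hB
  obtain ⟨x, hx⟩ := hθF ((MTensor.mapR R T f).comp a)
  have hgx : g x = 0 := by
    refine hθB ((congrArg (MTensor.mapR R T g).comp hx).trans ?_)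
    rw [← LinearMap.comp_assoc, hT.exact.linearMap_comp_eq_zero, LinearMap.zero_comp]
    exact LinearMap.ext fun t => (map_zero ((MTensor.mkHom S B T).flip t)).symm
  obtain ⟨m, rfl⟩ := (h.exact x).1 hgx
  exact ⟨m, (LinearMap.cancel_left hT.injective).1 hx⟩

theorem extVanishAt_tensor_one (h : IsShortExact f g) (hB : TorVanishAll S B T)
    (hF : ExtVanishAt Rᵐᵒᵖ T (MTensor S F T) 1) (hθB : Surjective (MTensor.thetaFun S B T R)) :
    ExtVanishAt Rᵐᵒᵖ T (MTensor S M T) 1 := by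
  refine (h.mapR R hB).extVanishAt_one_of_surjective_comp_left hF fun a => ?_
  obtain ⟨b, rfl⟩ := hθB a
  obtain ⟨x, rfl⟩ := h.surjective b
  exact ⟨MTensor.theta R x, rfl⟩

end IsShortExact

theorem ZComplex.IsExact.inAuslanderClass {C : ZComplex Sᵐᵒᵖ} (hC : C.IsExact)
    (hP : ∀ i, InAuslanderClass S R T (C.P i))
    (hZ : ∀ j, TorVanishAll S (LinearMap.ker (C.d j)) T) {j : ℤ}
    (e : M ≃ₗ[Sᵐᵒᵖ] LinearMap.ker (C.d j)) : InAuslanderClass S R T M := by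
  have hinj {j} {M : Type u} [AddCommGroup M] [Module Sᵐᵒᵖ M]
      (e : M ≃ₗ[Sᵐᵒᵖ] LinearMap.ker (C.d j)) : Injective (MTensor.thetaFun S M T R) :=
    thetaFun_injective_of_injective (hC.isShortExact e).injective (hP j).thetaBij.1
  have hsurj {j} {M : Type u} [AddCommGroup M] [Module Sᵐᵒᵖ M]
      (e : M ≃ₗ[Sᵐᵒᵖ] LinearMap.ker (C.d j)) : Surjective (MTensor.thetaFun S M T R) :=
    (hC.isShortExact e).thetaFun_surjective (hZ (j + 1)) (hP j).thetaBij.2 (hinj (.refl _ _))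
  have hPext (i) := extVanishAll_iff_forall_extVanishAt.1 (hP i).extVanish
  have hext (n : ℕ) {j} {M : Type u} [AddCommGroup M] [Module Sᵐᵒᵖ M]
      (e : M ≃ₗ[Sᵐᵒᵖ] LinearMap.ker (C.d j)) :
      ExtVanishAt Rᵐᵒᵖ T (MTensor S M T) (n + 1) := by
    induction n generalizing j M with
    | zero =>
      exact (hC.isShortExact e).extVanishAt_tensor_one (hZ (j + 1)) (hPext j 0) (hsurj (.refl _ _))
    | succ n ih =>
      exact ((hC.isShortExact e).mapR R (hZ (j + 1))).extVanishAt_snd_left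
        (ih (.refl _ _)) (hPext j (n + 1))
  exact
    { torVanish := (hC.isShortExact e).torVanishAll_left (hP j).torVanish (hZ (j + 1))
      extVanish := extVanishAll_iff_forall_extVanishAt.2 fun n => hext n e
      thetaBij := ⟨hinj e, hsurj e⟩ }

end AuslanderClass

theorem gorensteinFlat_mem_auslander_general {S R : Type u} [Ring S] [Ring R] {T : Type u}
    [AddCommGroup T] [Module S T] [Module Rᵐᵒᵖ T] [SMulCommClass S Rᵐᵒᵖ T]
    (hres : HasFGProjResolution Rᵐᵒᵖ T) (hbij : Bijective (leftHomothety S R T))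
    (hext : ExtVanishAll Rᵐᵒᵖ T T) {C : ZComplex Sᵐᵒᵖ}
    (hF : ∀ i, IsFlatRightModule S (C.P i)) (hC : C.IsExact)
    (hT : (∃ n, ProjDimLE S T n) ∨
      (∀ (I : Type u) [AddCommGroup I] [Module S I], Module.Injective S I → ∀ i,
        Exact (MTensor.map (T := I) (C.d i)) (MTensor.map (T := I) (C.d (i + 1)))) ∧
      ∃ n, InjDimLE S T n)
    {N : Type u} [AddCommGroup N] [Module Sᵐᵒᵖ N] {j : ℤ}
    (e : N ≃ₗ[Sᵐᵒᵖ] LinearMap.ker (C.d j)) : InAuslanderClass S R T N := by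
  have hZ (j) : TorVanishAll S (LinearMap.ker (C.d j)) T := by
    refine torVanishAll_iff_forall_extVanishAt.2 fun n => ?_
    obtain ⟨m, hm⟩ | ⟨hI, m, hm⟩ := hT
    · exact hC.extVanishAt_ker_of_projDimLE hF hm n j
    · exact hC.extVanishAt_ker_of_injDimLE hF hI hm n j
  exact hC.inAuslanderClass (fun i => (hF i).inAuslanderClass hres hbij hext) hZ e

/-- Let `T` be a Wakamatsu tilting `(S,R)`-bimodule and `N` a Gorenstein
flat right `S`-module. If either `pd(_S T) < ∞` or `id(_S T) < ∞`, then `N ∈ 𝒜_T(S)`. -/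
theorem gorensteinFlat_mem_auslander
    (S R : Type u) [Ring S] [Ring R]
    (T : Type u) [AddCommGroup T] [Module S T] [Module Rᵐᵒᵖ T] [SMulCommClass S Rᵐᵒᵖ T]
    (hW : IsWakamatsuTilting S R T)
    (N : Type u) [AddCommGroup N] [Module Sᵐᵒᵖ N] (hN : IsGorensteinFlat S N)
    (hT : (∃ n, ProjDimLE S T n) ∨ (∃ n, InjDimLE S T n)) :
    InAuslanderClass S R T N := by
  obtain ⟨C, hF, hC, hI, ⟨e⟩⟩ := hN
  exact gorensteinFlat_mem_auslander_general hW.fgProjResR hW.bijS hW.extR hF hC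
    (hT.imp_right (⟨hI, ·⟩)) e
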